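/- Let k ≥ 1, let α_j ≥ 0 and Δ_{j,n} = n^{−α_j} for j = 1,…,k, let A_n = ∏_{j=1}^k {iΔ_{j,n} : i ∈ ℤ} ⊂ ℝ^k, and let P_X ∈ P_n(A_n) be a joint type of k symbols with denominator n satisfying E_{P_X}[‖X‖_p^p] ≤ c for a real p ≥ 1. Then the support satisfies |S(P_X)| ≤ σ(k,p,c) · n^{(k + p∑_{j=1}^k α_j)/(k+p)}, where σ(k,p,c) = [V_k(1)]^{p/(k+p)} · [ ((k+1)/k)( max{1, k^{1/2 − 1/p}} c^{1/p} + min{k/4, √(k/12)} ) ]^{kp/(k+p)} and V_k(1) is the volume of the k-dimensional unit ball. -/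

import Mathlib

open Set

noncomputable section

/-- A joint type with denominator `n` of `k` symbols on the product lattice
`∏_j {i Δ_j : i ∈ ℤ} ⊂ ℝ^k`. -/
def IsTypeVec (k n : ℕ) (Δ : Fin k → ℝ) (P : (Fin k → ℝ) → ℝ) : Prop :=
  (∀ x, 0 ≤ P x) ∧ (∀ x, P x ≠ 0 → ∀ j, ∃ i : ℤ, x j = (i : ℝ) * Δ j) ∧
    (∀ x, ∃ m : ℕ, P x = (m : ℝ) / n) ∧ (Function.support P).Finite ∧ ∑ᶠ x, P x = 1

/-- The volume `V_k(1)` of the `k`-dimensional unit ball. -/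
def unitBallVol (k : ℕ) : ℝ :=
  (MeasureTheory.volume (Metric.ball (0 : EuclideanSpace ℝ (Fin k)) 1)).toReal

/-- `σ(k, p, c)` of Lemma 15. -/
def sigmaConst (k : ℕ) (p c : ℝ) : ℝ :=
  unitBallVol k ^ (p / (k + p)) *
    (((k : ℝ) + 1) / k *
        (max 1 ((k : ℝ) ^ ((1 : ℝ) / 2 - 1 / p)) * c ^ (1 / p) +
          min ((k : ℝ) / 4) (Real.sqrt ((k : ℝ) / 12)))) ^
      ((k : ℝ) * p / (k + p))

open MeasureTheory in
lemma aux_ball_integral (k : ℕ) (hk : 1 ≤ k) (R : ℝ) (hR : 0 ≤ R) :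
    ∫ y : Fin k → ℝ, max (R - ‖WithLp.toLp 2 y‖) 0 = unitBallVol k * R ^ (k + 1) / (k + 1) := by
  have h1 : ∫ y : Fin k → ℝ, max (R - ‖WithLp.toLp 2 y‖) 0
      = ∫ y : EuclideanSpace ℝ (Fin k), max (R - ‖y‖) 0 :=
    (PiLp.volume_preserving_toLp (Fin k)).integral_comp
      (MeasurableEquiv.toLp 2 _).measurableEmbedding (fun y => max (R - ‖y‖) 0)
  have : Nonempty (Fin k) := ⟨⟨0, hk⟩⟩
  rw [h1, integral_fun_norm_addHaar volume (fun t => max (R - t) 0)]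
  have h2 : ∫ y in Ioi (0:ℝ), y ^ (k - 1) • max (R - y) 0
      = ∫ y in (0:ℝ)..R, (R * y ^ (k - 1) - y ^ k) := by
    rw [intervalIntegral.integral_of_le hR]
    rw [setIntegral_eq_of_subset_of_forall_sdiff_eq_zero measurableSet_Ioi
      (Ioc_subset_Ioi_self : Ioc 0 R ⊆ Ioi 0)]
    · refine setIntegral_congr_fun measurableSet_Ioc ?_
      intro y hy
      simp only [smul_eq_mul]
      rw [max_eq_left (by linarith [hy.2])]
      obtain ⟨m, rfl⟩ : ∃ m, k = m + 1 := ⟨k - 1, by omega⟩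
      simp only [Nat.add_sub_cancel]
      ring
    · intro y hy
      have : R < y := by
        by_contra hcon
        exact hy.2 ⟨hy.1, not_lt.1 hcon⟩
      rw [max_eq_right (by linarith)]; simp
  simp only [finrank_euclideanSpace, Fintype.card_fin] at *
  rw [h2, intervalIntegral.integral_sub (Continuous.intervalIntegrable (by fun_prop) _ _)
    (Continuous.intervalIntegrable (by fun_prop) _ _),
    intervalIntegral.integral_const_mul, integral_pow, integral_pow]
  obtain ⟨m, rfl⟩ : ∃ m, k = m + 1 := ⟨k - 1, by omega⟩
  simp only [Nat.add_sub_cancel, nsmul_eq_mul, smul_eq_mul, unitBallVol, Measure.real]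
  push_cast
  have : (m:ℝ) + 1 ≠ 0 := by positivity
  have : (m:ℝ) + 1 + 1 ≠ 0 := by positivity
  field_simp
  ring

open MeasureTheory in
lemma aux_cell_coord (k : ℕ) (a b : Fin k → ℝ) (hab : ∀ i, a i ≤ b i) (j : Fin k) (f : ℝ → ℝ) :
    ∫ y in Set.pi univ (fun i => Ico (a i) (b i)), f (y j)
      = (∏ i ∈ Finset.univ.erase j, (b i - a i)) * ∫ t in Ico (a j) (b j), f t := by
  rw [volume_pi, Measure.restrict_pi_pi]
  have h := integral_fintype_prod_eq_prod (𝕜 := ℝ)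
    (fun (i : Fin k) (t : ℝ) => if i = j then f t else 1)
    (μ := fun i => volume.restrict (Ico (a i) (b i)))
  have h1 : ∀ x : Fin k → ℝ, (∏ i, if i = j then f (x i) else 1) = f (x j) := by
    intro x; simp
  simp only [h1] at h
  rw [h, ← Finset.mul_prod_erase _ _ (Finset.mem_univ j), mul_comm]
  congr 1
  · apply Finset.prod_congr rfl
    intro i hi
    simp [Finset.ne_of_mem_erase hi, Measure.real, hab i]
  · simp

open MeasureTheory in
lemma aux_abs (x d : ℝ) (hd : 0 ≤ d) :
    ∫ t in Ico (x - d/2) (x + d/2), |t - x| = d ^ 2 / 4 := by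
  rw [integral_Ico_eq_integral_Ioc, ← intervalIntegral.integral_of_le (by linarith),
    intervalIntegral.integral_comp_sub_right (fun t => |t|)]
  rw [← intervalIntegral.integral_add_adjacent_intervals (b := 0)
    (continuous_abs.intervalIntegrable _ _) (continuous_abs.intervalIntegrable _ _)]
  have e1 : ∫ t in (x - d/2 - x)..0, |t| = ∫ t in (x - d/2 - x)..0, -t := by
    apply intervalIntegral.integral_congr
    intro t ht
    rw [uIcc_of_le (by linarith)] at ht
    exact abs_of_nonpos ht.2
  have e2 : ∫ t in 0..(x + d/2 - x), |t| = ∫ t in 0..(x + d/2 - x), t := by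
    apply intervalIntegral.integral_congr
    intro t ht
    rw [uIcc_of_le (by linarith)] at ht
    exact abs_of_nonneg ht.1
  rw [e1, e2, intervalIntegral.integral_neg]
  simp only [integral_id]
  ring

open MeasureTheory in
lemma aux_sq (x d : ℝ) (hd : 0 ≤ d) :
    ∫ t in Ico (x - d/2) (x + d/2), (t - x) ^ 2 = d ^ 3 / 12 := by
  rw [integral_Ico_eq_integral_Ioc, ← intervalIntegral.integral_of_le (by linarith),
    intervalIntegral.integral_comp_sub_right (fun t => t ^ 2)]
  rw [integral_pow]
  norm_num
  ring

/-- the half-open cell centred at `x` -/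
def auxCell {k : ℕ} (d x : Fin k → ℝ) : Set (Fin k → ℝ) :=
  Set.pi univ (fun i => Ico (x i - d i / 2) (x i + d i / 2))

lemma auxCell_meas {k : ℕ} (d x : Fin k → ℝ) : MeasurableSet (auxCell d x) :=
  MeasurableSet.univ_pi (fun _ => measurableSet_Ico)

open MeasureTheory in
lemma auxCell_intOn {k : ℕ} (d x : Fin k → ℝ) (f : (Fin k → ℝ) → ℝ) (hf : Continuous f) :
    IntegrableOn f (auxCell d x) := by
  have hc : IsCompact (Set.pi univ (fun i => Icc (x i - d i / 2) (x i + d i / 2))) :=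
    isCompact_univ_pi (fun _ => isCompact_Icc)
  exact (hf.continuousOn.integrableOn_compact hc).mono_set
    (Set.pi_mono (fun _ _ => Ico_subset_Icc_self))

open MeasureTheory in
lemma auxCell_vol {k : ℕ} (d x : Fin k → ℝ) (hd : ∀ i, 0 ≤ d i) :
    volume.real (auxCell d x) = ∏ i, d i := by
  unfold auxCell Measure.real
  rw [Real.volume_pi_Ico_toReal (fun i => by linarith [hd i])]
  exact Finset.prod_congr rfl (fun i _ => by ring)

open MeasureTheory in
lemma auxCell_coord {k : ℕ} (d x : Fin k → ℝ) (hd : ∀ i, 0 ≤ d i) (j : Fin k) (f : ℝ → ℝ) :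
    ∫ y in auxCell d x, f (y j)
      = (∏ i ∈ Finset.univ.erase j, d i) * ∫ t in Ico (x j - d j / 2) (x j + d j / 2), f t := by
  unfold auxCell
  rw [aux_cell_coord k _ _ (fun i => by linarith [hd i]) j f]
  congr 1
  exact Finset.prod_congr rfl (fun i _ => by ring)

open MeasureTheory in
lemma auxCell_norm {k : ℕ} (hk : 1 ≤ k) (d x : Fin k → ℝ) (hd : ∀ i, 0 ≤ d i)
    (hd1 : ∀ i, d i ≤ 1) :
    ∫ y in auxCell d x, ‖WithLp.toLp 2 y - WithLp.toLp 2 x‖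
      ≤ (∏ i, d i) * min ((k : ℝ) / 4) (Real.sqrt ((k : ℝ) / 12)) := by
  have hD : 0 ≤ ∏ i, d i := Finset.prod_nonneg (fun i _ => hd i)
  have hcn : Continuous (fun y : Fin k → ℝ => ‖WithLp.toLp 2 y - WithLp.toLp 2 x‖) := by fun_prop
  have hn : ∀ y : Fin k → ℝ, ‖WithLp.toLp 2 y - WithLp.toLp 2 x‖ ^ 2 = ∑ j, (y j - x j) ^ 2 := by
    intro y
    rw [EuclideanSpace.real_norm_sq_eq]
    simp
  rcases min_choice ((k : ℝ) / 4) (Real.sqrt ((k : ℝ) / 12)) with h | h <;> rw [h]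
  · calc ∫ y in auxCell d x, ‖WithLp.toLp 2 y - WithLp.toLp 2 x‖
        ≤ ∫ y in auxCell d x, ∑ j, |y j - x j| := by
          apply setIntegral_mono (auxCell_intOn d x _ hcn)
            (auxCell_intOn d x _ (by fun_prop))
          intro y
          apply abs_le_of_sq_le_sq' _ (Finset.sum_nonneg (fun _ _ => abs_nonneg _)) |>.2
          rw [hn]
          calc ∑ j, (y j - x j) ^ 2 = ∑ j, |y j - x j| ^ 2 := by simp
            _ ≤ _ := Finset.sum_sq_le_sq_sum_of_nonneg (fun _ _ => abs_nonneg _)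
      _ = ∑ j, ∫ y in auxCell d x, |y j - x j| :=
          integral_finsetSum _ (fun j _ => auxCell_intOn d x _ (by fun_prop))
      _ ≤ ∑ j : Fin k, (∏ i, d i) * (1 / 4) := by
          apply Finset.sum_le_sum
          intro j _
          rw [auxCell_coord d x hd j (fun t => |t - x j|), aux_abs _ _ (hd j)]
          rw [← Finset.mul_prod_erase _ _ (Finset.mem_univ j)]
          have : 0 ≤ ∏ i ∈ Finset.univ.erase j, d i := Finset.prod_nonneg (fun i _ => hd i)
          have h2 : d j ^ 2 ≤ d j := by nlinarith [hd j, hd1 j]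
          nlinarith
      _ = _ := by simp; ring
  · set s := Real.sqrt ((k : ℝ) / 12) with hs
    have hk0 : (0:ℝ) < k := by exact_mod_cast hk
    have hspos : 0 < s := Real.sqrt_pos.2 (by positivity)
    have hs2 : s ^ 2 = k / 12 := Real.sq_sqrt (by positivity)
    calc ∫ y in auxCell d x, ‖WithLp.toLp 2 y - WithLp.toLp 2 x‖
        ≤ ∫ y in auxCell d x, ((∑ j, (y j - x j) ^ 2) / (2 * s) + s / 2) := by
          apply setIntegral_mono (auxCell_intOn d x _ hcn)
            (auxCell_intOn d x _ (by fun_prop))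
          intro y
          simp only
          rw [← hn]
          set g := ‖WithLp.toLp 2 y - WithLp.toLp 2 x‖
          have : g ^ 2 / (2 * s) + s / 2 - g = (g - s) ^ 2 / (2 * s) := by field_simp; ring
          have : 0 ≤ (g - s) ^ 2 / (2 * s) := by positivity
          linarith
      _ = (∑ j, ∫ y in auxCell d x, (y j - x j) ^ 2) / (2 * s) + (∏ i, d i) * (s / 2) := by
          rw [integral_add (auxCell_intOn d x _ (by fun_prop)) (auxCell_intOn d x _ (by fun_prop)),
            integral_div, integral_finsetSum _ (fun j _ => auxCell_intOn d x _ (by fun_prop)),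
            setIntegral_const, auxCell_vol d x hd, smul_eq_mul]
      _ ≤ (∑ j : Fin k, (∏ i, d i) * (1 / 12)) / (2 * s) + (∏ i, d i) * (s / 2) := by
          gcongr with j _
          rw [auxCell_coord d x hd j (fun t => (t - x j) ^ 2), aux_sq _ _ (hd j)]
          rw [← Finset.mul_prod_erase _ _ (Finset.mem_univ j)]
          have : 0 ≤ ∏ i ∈ Finset.univ.erase j, d i := Finset.prod_nonneg (fun i _ => hd i)
          have h2 : d j ^ 3 ≤ d j := by
            have := pow_le_of_le_one (hd j) (hd1 j) (n := 3) (by norm_num)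
            simpa using this
          nlinarith
      _ = (∏ i, d i) * (s ^ 2 / (2 * s) + s / 2) := by
          rw [hs2]; simp; ring
      _ = _ := by field_simp; ring

open MeasureTheory in
lemma aux_main {k : ℕ} (hk : 1 ≤ k) (d : Fin k → ℝ) (hd : ∀ i, 0 ≤ d i)
    (hd1 : ∀ i, d i ≤ 1) (S : Finset (Fin k → ℝ))
    (hS : ∀ x ∈ S, ∀ j, ∃ i : ℤ, x j = (i : ℝ) * d j) (R : ℝ) (hR : 0 ≤ R) :
    (S.card : ℝ) * (∏ i, d i) * R - (∏ i, d i) * ∑ x ∈ S, ‖WithLp.toLp 2 x‖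
      - S.card * ((∏ i, d i) * min ((k : ℝ) / 4) (Real.sqrt ((k : ℝ) / 12)))
      ≤ unitBallVol k * R ^ (k + 1) / (k + 1) := by
  rw [← aux_ball_integral k hk R hR]
  set D := ∏ i, d i
  set m := min ((k : ℝ) / 4) (Real.sqrt ((k : ℝ) / 12))
  have hcm : Continuous (fun y : Fin k → ℝ => max (R - ‖WithLp.toLp 2 y‖) 0) := by fun_prop
  have hint : Integrable (fun y : Fin k → ℝ => max (R - ‖WithLp.toLp 2 y‖) 0) := by
    have hcomp : HasCompactSupport (fun y : EuclideanSpace ℝ (Fin k) => max (R - ‖y‖) 0) := by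
      apply HasCompactSupport.of_support_subset_isCompact (isCompact_closedBall 0 R)
      intro y hy
      simp only [Metric.mem_closedBall, dist_zero_right]
      by_contra hcon
      apply hy
      simp only
      rw [max_eq_right (by linarith)]
    have := (Continuous.integrable_of_hasCompactSupport (μ := volume) (by fun_prop) hcomp)
    exact ((PiLp.volume_preserving_toLp (Fin k)).integrable_comp_emb
      (MeasurableEquiv.toLp 2 _).measurableEmbedding).2 this
  have hdisj : Set.Pairwise (↑S) (Function.onFun Disjoint (fun x => auxCell d x)) := by
    intro x hx x' hx' hne
    rw [Function.onFun, Set.disjoint_left]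
    intro y hy hy'
    apply hne
    funext j
    obtain ⟨i, hi⟩ := hS x hx j
    obtain ⟨i', hi'⟩ := hS x' hx' j
    have h1 := hy j (mem_univ _)
    have h2 := hy' j (mem_univ _)
    simp only [mem_Ico] at h1 h2
    rw [hi, hi'] at *
    have hdj : 0 < d j := by linarith
    have a1 : ((i:ℝ) - i') * d j < 1 * d j := by linarith
    have a2 : ((i':ℝ) - i) * d j < 1 * d j := by linarith
    have b1 := lt_of_mul_lt_mul_right a1 hdj.le
    have b2 := lt_of_mul_lt_mul_right a2 hdj.le
    have c1 : i - i' < 1 := by exact_mod_cast b1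
    have c2 : i' - i < 1 := by exact_mod_cast b2
    have : i = i' := by omega
    rw [this]
  calc (S.card : ℝ) * D * R - D * ∑ x ∈ S, ‖WithLp.toLp 2 x‖ - S.card * (D * m)
      = ∑ x ∈ S, (D * R - D * ‖WithLp.toLp 2 x‖ - D * m) := by
        simp only [Finset.sum_sub_distrib, Finset.sum_const, nsmul_eq_mul, Finset.mul_sum]
        ring
    _ ≤ ∑ x ∈ S, ∫ y in auxCell d x, max (R - ‖WithLp.toLp 2 y‖) 0 := by
        apply Finset.sum_le_sum
        intro x _
        have h := auxCell_norm hk d x hd hd1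
        calc D * R - D * ‖WithLp.toLp 2 x‖ - D * m
            ≤ D * (R - ‖WithLp.toLp 2 x‖)
              - ∫ y in auxCell d x, ‖WithLp.toLp 2 y - WithLp.toLp 2 x‖ := by linarith
          _ = ∫ y in auxCell d x, ((R - ‖WithLp.toLp 2 x‖)
              - ‖WithLp.toLp 2 y - WithLp.toLp 2 x‖) := by
              rw [integral_sub (auxCell_intOn d x _ (by fun_prop))
                (auxCell_intOn d x _ (by fun_prop)), setIntegral_const, auxCell_vol d x hd,
                smul_eq_mul]
          _ ≤ _ := by
              apply setIntegral_mono (auxCell_intOn d x _ (by fun_prop)) (auxCell_intOn d x _ hcm)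
              intro y
              apply le_max_of_le_left
              have := norm_add_le (WithLp.toLp 2 x) (WithLp.toLp 2 y - WithLp.toLp 2 x)
              rw [add_sub_cancel] at this
              linarith
    _ = ∫ y in ⋃ x ∈ S, auxCell d x, max (R - ‖WithLp.toLp 2 y‖) 0 := by
        rw [integral_biUnion_finset S (fun x _ => auxCell_meas d x) hdisj
          (fun x _ => auxCell_intOn d x _ hcm)]
    _ ≤ _ := setIntegral_le_integral hint (ae_of_all _ (fun y => le_max_right _ _))

lemma aux_norm_p {k : ℕ} (hk : 1 ≤ k) (p : ℝ) (hp : 1 ≤ p) (x : Fin k → ℝ) :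
    ‖WithLp.toLp 2 x‖ ≤ max 1 ((k : ℝ) ^ ((1 : ℝ) / 2 - 1 / p)) * (∑ j, |x j| ^ p) ^ (1 / p) := by
  have hp0 : 0 < p := by linarith
  have hk0 : (0:ℝ) < k := by exact_mod_cast hk
  set T := ∑ j, |x j| ^ p with hT
  have hT0 : 0 ≤ T := Finset.sum_nonneg (fun _ _ => by positivity)
  have hn : ‖WithLp.toLp 2 x‖ = (∑ j, |x j| ^ 2) ^ ((1:ℝ) / 2) := by
    rw [EuclideanSpace.norm_eq, Real.sqrt_eq_rpow]; simp
  have hQ0 : 0 ≤ ∑ j, |x j| ^ 2 := Finset.sum_nonneg (fun _ _ => by positivity)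
  rcases le_total p 2 with h2 | h2
  · refine le_trans ?_ (mul_le_mul_of_nonneg_right (le_max_left _ _) (by positivity))
    rw [one_mul, hn]
    have key : ∑ j, |x j| ^ 2 ≤ T ^ (2 / p) := by
      have hle : ∀ j, |x j| ^ p ≤ T := fun j =>
        Finset.single_le_sum (f := fun j => |x j| ^ p) (fun _ _ => by positivity)
          (Finset.mem_univ j)
      have hq : 0 ≤ 2 / p - 1 := by rw [sub_nonneg, le_div_iff₀ hp0]; linarith
      calc ∑ j, |x j| ^ 2 = ∑ j, (|x j| ^ p) * (|x j| ^ p) ^ (2 / p - 1) := by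
            apply Finset.sum_congr rfl
            intro j _
            rw [← Real.rpow_mul (abs_nonneg _), ← Real.rpow_add_of_nonneg (abs_nonneg _) hp0.le
              (by positivity), ← Real.rpow_natCast]
            congr 1
            field_simp
            push_cast; ring
        _ ≤ ∑ j, (|x j| ^ p) * T ^ (2 / p - 1) := by
            gcongr with j _
            exact hle j
        _ = T * T ^ (2 / p - 1) := by rw [← Finset.sum_mul]
        _ = T ^ (1:ℝ) * T ^ (2 / p - 1) := by rw [Real.rpow_one]
        _ = T ^ (2 / p) := by
            rw [← Real.rpow_add_of_nonneg hT0 (by norm_num) hq]; congr 1; ring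
    calc (∑ j, |x j| ^ 2) ^ ((1:ℝ) / 2) ≤ (T ^ (2 / p)) ^ ((1:ℝ) / 2) := by gcongr
      _ = T ^ (1 / p) := by
        rw [← Real.rpow_mul hT0]; congr 1; field_simp
  · refine le_trans ?_ (mul_le_mul_of_nonneg_right (le_max_right _ _) (by positivity))
    rw [hn]
    have key := Real.rpow_sum_le_const_mul_sum_rpow_of_nonneg (s := Finset.univ)
      (f := fun j => |x j| ^ 2) (p := p / 2) (by linarith) (fun _ _ => by positivity)
    have e : ∀ j, (|x j| ^ 2) ^ (p / 2) = |x j| ^ p := by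
      intro j
      rw [← Real.rpow_natCast, ← Real.rpow_mul (abs_nonneg _)]
      congr 1; push_cast; ring
    simp only [e, Finset.card_univ, Fintype.card_fin] at key
    calc (∑ j, |x j| ^ 2) ^ ((1:ℝ) / 2) = ((∑ j, |x j| ^ 2) ^ (p / 2)) ^ (1 / p) := by
          rw [← Real.rpow_mul hQ0]; congr 1; field_simp
      _ ≤ ((k:ℝ) ^ (p / 2 - 1) * T) ^ (1 / p) := by gcongr
      _ = _ := by
          rw [Real.mul_rpow (by positivity) hT0, ← Real.rpow_mul hk0.le]
          congr 2; field_simp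

/-- Lemma 15 (Support of a joint type): the support of a joint type of `k` symbols with
the generalized moment constraint `E[‖X‖_p^p] ≤ c` satisfies
`|S(P_X)| ≤ σ(k,p,c) n^{(k + p ∑ α_j)/(k+p)}`. -/
theorem support_of_joint_type
    (k n : ℕ) (hk : 1 ≤ k) (p c : ℝ) (hp : 1 ≤ p) (α : Fin k → ℝ) (hα : ∀ j, 0 ≤ α j)
    (P : (Fin k → ℝ) → ℝ) (hP : IsTypeVec k n (fun j => (n : ℝ) ^ (-(α j))) P)
    (hc : (∑ᶠ x, P x * ∑ j, |x j| ^ p) ≤ c) :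
    ((Function.support P).ncard : ℝ) ≤
      sigmaConst k p c * (n : ℝ) ^ (((k : ℝ) + p * ∑ j, α j) / ((k : ℝ) + p)) := by
  obtain ⟨hP0, hPl, hPm, hfin, hsum⟩ := hP
  have hp0 : 0 < p := by linarith
  have hk0 : (0:ℝ) < k := by exact_mod_cast hk
  have hn : 0 < n := by
    rcases Nat.eq_zero_or_pos n with h | h
    · exfalso
      subst h
      have : ∀ x, P x = 0 := by
        intro x
        obtain ⟨m, hm⟩ := hPm x
        simpa using hm
      simp [this] at hsum
    · exact h
  have hn0 : (0:ℝ) < n := by exact_mod_cast hn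
  have hn1 : (1:ℝ) ≤ n := by exact_mod_cast hn
  set d : Fin k → ℝ := fun j => (n : ℝ) ^ (-(α j)) with hd
  have hdpos : ∀ j, 0 < d j := fun j => Real.rpow_pos_of_pos hn0 _
  have hd1 : ∀ j, d j ≤ 1 := fun j =>
    Real.rpow_le_one_of_one_le_of_nonpos hn1 (by linarith [hα j])
  set S := hfin.toFinset with hSdef
  have hcard : (Function.support P).ncard = S.card := Set.ncard_eq_toFinset_card _ hfin
  rw [hcard]
  have hmem : ∀ x, x ∈ S ↔ P x ≠ 0 := by intro x; simp [hSdef]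
  have hPge : ∀ x ∈ S, 1 / (n:ℝ) ≤ P x := by
    intro x hx
    obtain ⟨m, hm⟩ := hPm x
    have h0 := (hmem x).1 hx
    have : m ≠ 0 := by rintro rfl; simp [hm] at h0
    have : (1:ℝ) ≤ m := by exact_mod_cast Nat.one_le_iff_ne_zero.2 this
    rw [hm]; gcongr
  have hsumS : ∑ x ∈ S, P x = 1 := by
    rw [← hsum]
    exact (finsum_eq_sum_of_support_subset _ (by simp [hSdef])).symm
  have hcS : ∑ x ∈ S, P x * ∑ j, |x j| ^ p ≤ c := by
    refine le_trans (le_of_eq ?_) hc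
    refine (finsum_eq_sum_of_support_subset _ ?_).symm
    intro x hx
    simp only [hSdef, Set.Finite.coe_toFinset]
    intro h0
    apply hx
    simp [h0]
  have hT0 : ∀ x : Fin k → ℝ, 0 ≤ ∑ j, |x j| ^ p := fun x =>
    Finset.sum_nonneg (fun _ _ => by positivity)
  have hc0 : 0 ≤ c := le_trans (Finset.sum_nonneg (fun x _ => mul_nonneg (hP0 x) (hT0 x))) hcS
  have hTsum : ∑ x ∈ S, ∑ j, |x j| ^ p ≤ n * c := by
    calc ∑ x ∈ S, ∑ j, |x j| ^ p ≤ ∑ x ∈ S, n * (P x * ∑ j, |x j| ^ p) := by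
          apply Finset.sum_le_sum
          intro x hx
          have h1 : 1 ≤ n * P x := by
            have := hPge x hx
            rwa [div_le_iff₀' hn0] at this
          have := mul_le_mul_of_nonneg_right h1 (hT0 x)
          linarith
      _ = n * ∑ x ∈ S, P x * ∑ j, |x j| ^ p := by rw [Finset.mul_sum]
      _ ≤ _ := by gcongr
  set N : ℝ := (S.card : ℝ) with hN
  have hNn : N ≤ n := by
    have : ∑ x ∈ S, 1 / (n:ℝ) ≤ 1 := (Finset.sum_le_sum hPge).trans_eq hsumS
    rw [Finset.sum_const, nsmul_eq_mul, mul_one_div, div_le_one hn0] at this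
    exact this
  have hNpos : 0 < N := by
    have : S.Nonempty := by
      rw [Finset.nonempty_iff_ne_empty]
      intro h
      rw [h] at hsumS
      simp at hsumS
    rw [hN]
    exact_mod_cast this.card_pos
  set M := max 1 ((k : ℝ) ^ ((1 : ℝ) / 2 - 1 / p)) with hM
  have hM1 : 1 ≤ M := le_max_left _ _
  set m := min ((k : ℝ) / 4) (Real.sqrt ((k : ℝ) / 12)) with hm
  have hm0 : 0 ≤ m := le_min (by positivity) (Real.sqrt_nonneg _)
  set D := ∏ i, d i with hDdef
  have hDpos : 0 < D := Finset.prod_pos (fun i _ => hdpos i)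
  have hDeq : D = (n:ℝ) ^ (-∑ j, α j) := by
    rw [hDdef, hd, ← Finset.sum_neg_distrib, Real.rpow_sum_of_pos hn0]
  set V := unitBallVol k with hV
  have hVpos : 0 < V := by
    rw [hV, unitBallVol]
    exact ENNReal.toReal_pos (Metric.measure_ball_pos _ _ one_pos).ne'
      MeasureTheory.measure_ball_lt_top.ne
  set r := ((n:ℝ) / N) ^ (1 / p) with hr
  have hr1 : 1 ≤ r := Real.one_le_rpow ((one_le_div hNpos).2 hNn) (by positivity)
  -- the mean of the norms
  have hnorm : ∑ x ∈ S, ‖WithLp.toLp 2 x‖ ≤ N * (r * (M * c ^ (1 / p))) := by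
    have hh : ∑ x ∈ S, (∑ j, |x j| ^ p) ^ (1 / p) ≤ N * (r * c ^ (1 / p)) := by
      have key := Real.rpow_sum_le_const_mul_sum_rpow_of_nonneg (s := S)
        (f := fun x => (∑ j, |x j| ^ p) ^ (1 / p)) (p := p) hp
        (fun x _ => Real.rpow_nonneg (hT0 x) _)
      have e : ∀ x : Fin k → ℝ, ((∑ j, |x j| ^ p) ^ (1 / p)) ^ p = ∑ j, |x j| ^ p := by
        intro x
        rw [← Real.rpow_mul (hT0 x), one_div_mul_cancel hp0.ne', Real.rpow_one]
      simp only [e] at key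
      have hA0 : 0 ≤ ∑ x ∈ S, (∑ j, |x j| ^ p) ^ (1 / p) :=
        Finset.sum_nonneg (fun x _ => Real.rpow_nonneg (hT0 x) _)
      rw [← Real.rpow_le_rpow_iff hA0 (by positivity) hp0]
      refine key.trans ?_
      have hcp : (c ^ (1 / p)) ^ p = c := by
        rw [← Real.rpow_mul hc0, one_div_mul_cancel hp0.ne', Real.rpow_one]
      have hrp : r ^ p = n / N := by
        rw [hr, ← Real.rpow_mul (by positivity), one_div_mul_cancel hp0.ne', Real.rpow_one]
      rw [Real.mul_rpow hNpos.le (by positivity), Real.mul_rpow (by positivity) (by positivity),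
        hcp, hrp]
      calc N ^ (p - 1) * ∑ x ∈ S, ∑ j, |x j| ^ p ≤ N ^ (p - 1) * (n * c) := by gcongr
        _ = _ := by rw [Real.rpow_sub hNpos, Real.rpow_one]; field_simp
    calc ∑ x ∈ S, ‖WithLp.toLp 2 x‖ ≤ ∑ x ∈ S, M * (∑ j, |x j| ^ p) ^ (1 / p) :=
          Finset.sum_le_sum (fun x _ => aux_norm_p hk p hp x)
      _ = M * ∑ x ∈ S, (∑ j, |x j| ^ p) ^ (1 / p) := by rw [Finset.mul_sum]
      _ ≤ M * (N * (r * c ^ (1 / p))) := by gcongr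
      _ = _ := by ring
  set R := (N * D / V) ^ ((1:ℝ) / k) with hR
  have hRpos : 0 < R := Real.rpow_pos_of_pos (by positivity) _
  have hRk : R ^ k = N * D / V := by
    rw [hR, ← Real.rpow_natCast, ← Real.rpow_mul (by positivity), one_div_mul_cancel hk0.ne',
      Real.rpow_one]
  have hmain := aux_main hk d (fun i => (hdpos i).le) hd1 S
    (fun x hx => hPl x ((hmem x).1 hx)) R hRpos.le
  set Q := M * c ^ (1 / p) + m with hQ
  have hQ0 : 0 ≤ Q := by positivity
  set K := ((k:ℝ) + 1) / k * Q with hK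
  have hK0 : 0 ≤ K := by positivity
  have hRle : R ≤ r * K := by
    have h1 : unitBallVol k * R ^ (k + 1) / (k + 1) = N * D * (R / (k + 1)) := by
      rw [pow_succ, hRk, ← hV]; field_simp
    rw [h1] at hmain
    have h2 : D * ∑ x ∈ S, ‖WithLp.toLp 2 x‖ ≤ D * (N * (r * (M * c ^ (1 / p)))) := by gcongr
    have h3 : N * (D * m) ≤ N * (D * (r * m)) := by
      gcongr
      exact le_mul_of_one_le_left hm0 hr1
    have h4 : N * D * (R - R / (k + 1)) ≤ N * D * (r * Q) := by
      rw [hQ]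
      linarith
    have h5 : R - R / (k + 1) ≤ r * Q := le_of_mul_le_mul_left h4 (by positivity)
    have h6 : R = ((k:ℝ) + 1) / k * (R - R / (k + 1)) := by field_simp; ring
    calc R = ((k:ℝ) + 1) / k * (R - R / (k + 1)) := h6
      _ ≤ ((k:ℝ) + 1) / k * (r * Q) := by gcongr
      _ = _ := by rw [hK]; ring
  have hND : N * D ≤ V * (r * K) ^ k := by
    have : R ^ k ≤ (r * K) ^ k := by gcongr
    rw [hRk, div_le_iff₀' hVpos] at this
    exact this
  have hrk : r ^ k = (n:ℝ) ^ ((k:ℝ) / p) / N ^ ((k:ℝ) / p) := by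
    rw [hr, ← Real.rpow_natCast, ← Real.rpow_mul (by positivity), Real.div_rpow hn0.le hNpos.le]
    congr 2 <;> ring
  have hpow : N ^ (((k:ℝ) + p) / p) ≤ V * K ^ k * (n:ℝ) ^ ((k:ℝ) / p + ∑ j, α j) := by
    have e1 : ((k:ℝ) + p) / p = k / p + 1 := by field_simp
    have hNk : 0 < N ^ ((k:ℝ) / p) := by positivity
    rw [mul_pow, hrk, hDeq, Real.rpow_neg hn0.le] at hND
    have hna : 0 < (n:ℝ) ^ (∑ j, α j) := by positivity
    rw [e1, Real.rpow_add hNpos, Real.rpow_one, Real.rpow_add hn0]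
    calc N ^ ((k:ℝ) / p) * N
        = N ^ ((k:ℝ) / p) * (n:ℝ) ^ (∑ j, α j) * (N * ((n:ℝ) ^ (∑ j, α j))⁻¹) := by
          field_simp
      _ ≤ N ^ ((k:ℝ) / p) * (n:ℝ) ^ (∑ j, α j) *
          (V * ((n:ℝ) ^ ((k:ℝ) / p) / N ^ ((k:ℝ) / p) * K ^ k)) := by gcongr
      _ = _ := by field_simp
  have hsig : sigmaConst k p c = V ^ (p / (k + p)) * K ^ ((k : ℝ) * p / (k + p)) := rfl
  rw [hsig]
  have hkp : 0 < (k:ℝ) + p := by positivity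
  calc N = (N ^ (((k:ℝ) + p) / p)) ^ (p / (k + p)) := by
        rw [← Real.rpow_mul hNpos.le]
        have : ((k:ℝ) + p) / p * (p / (k + p)) = 1 := by field_simp
        rw [this, Real.rpow_one]
    _ ≤ (V * K ^ k * (n:ℝ) ^ ((k:ℝ) / p + ∑ j, α j)) ^ (p / (k + p)) := by gcongr
    _ = _ := by
        rw [Real.mul_rpow (by positivity) (by positivity), Real.mul_rpow hVpos.le (by positivity),
          ← Real.rpow_natCast, ← Real.rpow_mul hK0, ← Real.rpow_mul hn0.le]
        have e1 : (k:ℝ) * (p / (k + p)) = k * p / (k + p) := by ring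
        have e2 : ((k:ℝ) / p + ∑ j, α j) * (p / (k + p)) = (k + p * ∑ j, α j) / (k + p) := by
          field_simp
        rw [e1, e2]
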